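/- Fix p ∈ (1/2, 1). For every A > 0 there exist c > 0 and k_0 such that for all λ > 0 and all integers k ≥ k_0 with |k − log_{1/√(pq)} λ| ≤ A k^{1/2}, one has E X̄_k(λ) − E X̄_{k+1}(λ) > c k^{−1/2}. -/

import Mathlib

/-!
Poissonized model for partial fillup in tries (Janson–Szpankowski).

An outcome `ω : ℕ × (ℕ → ℕ → Bool)` consists of the number `ω.1 = N` of inserted
strings and a source `ω.2` of infinitely many strings, where `ω.2 i j` is the `j`-th
bit of the `i`-th string; the inserted strings are the strings `0, …, N-1`.  Under the
Poissonized measure, `N ~ Po(λ)` is independent of the strings, and all bits are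
i.i.d. with `P(bit = 1) = p`.
-/

open MeasureTheory ProbabilityTheory Real Filter

/-- The number of strings among the first `n` (encoded in `ω`) whose first `k` bits
form the word `r ∈ {0,1}^k`. -/
def prefCount (ω : ℕ → ℕ → Bool) (n k : ℕ) (r : Fin k → Bool) : ℕ :=
  ((Finset.range n).filter fun i => ∀ j : Fin k, ω i j = r j).card

/-- `X_k`: the number of words `r ∈ {0,1}^k` that are prefixes of at least two of the
first `n` strings. -/
def fillCount (ω : ℕ → ℕ → Bool) (n k : ℕ) : ℕ :=
  (Finset.univ.filter fun r : Fin k → Bool => 2 ≤ prefCount ω n k r).card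

/-- `ν` is a probability measure on `ℕ → ℕ → Bool` under which all the bits
`ω i j` are i.i.d. with `P(bit = 1) = p` (characterized by cylinder probabilities). -/
def IIDBits (p : ℝ) (ν : Measure (ℕ → ℕ → Bool)) : Prop :=
  IsProbabilityMeasure ν ∧
    ∀ (S : Finset (ℕ × ℕ)) (b : ℕ × ℕ → Bool),
      ν {ω | ∀ s ∈ S, ω s.1 s.2 = b s} =
        ∏ s ∈ S, ENNReal.ofReal (if b s then p else 1 - p)

/-- The Poissonized model: the number of inserted strings is `Po(λ)`, independent of the
i.i.d. source `ν` of strings. -/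
noncomputable def poModel (lam : NNReal) (ν : Measure (ℕ → ℕ → Bool)) :
    Measure (ℕ × (ℕ → ℕ → Bool)) :=
  (ProbabilityTheory.poissonMeasure lam).prod ν

/-- `X_k(λ)` as a random variable on the Poissonized model: the number of words
`r ∈ {0,1}^k` that are prefixes of at least two of the `N` inserted strings. -/
def fillCountPo (k : ℕ) (ω : ℕ × (ℕ → ℕ → Bool)) : ℕ :=
  fillCount ω.2 ω.1 k

/-- `X̄_k(λ) = X_k(λ) / 2^k`. -/
noncomputable def fracFilledPo (k : ℕ) (ω : ℕ × (ℕ → ℕ → Bool)) : ℝ :=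
  (fillCountPo k ω : ℝ) / 2 ^ k


lemma aux_central (n : ℕ) (hn : 1 ≤ n) : (4 ^ n) ^ 2 ≤ 4 * n * (Nat.centralBinom n) ^ 2 := by
  induction n, hn using Nat.le_induction with
  | base => simp [Nat.centralBinom]
  | succ n hn ih =>
    have h := Nat.succ_mul_centralBinom_succ n
    have h2 : (n + 1) * (4 * (n + 1) * (Nat.centralBinom (n+1)) ^ 2)
        = 4 * (2 * (2 * n + 1) * n.centralBinom) ^ 2 := by rw [← h]; ring
    refine Nat.le_of_mul_le_mul_left ?_ (Nat.succ_pos n)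
    rw [h2]
    calc (n+1) * (4 ^ (n+1)) ^ 2 = 16 * (n+1) * (4^n)^2 := by ring
      _ ≤ 16 * (n+1) * (4 * n * (Nat.centralBinom n) ^ 2) := by gcongr
      _ ≤ _ := by nlinarith [sq_nonneg n.centralBinom]

/-- central -/
lemma aux_mid (k m : ℕ) (hk : 1 ≤ k) (h1 : k ≤ 2 * m) (h2 : 2 * m ≤ k + 1) :
    (2:ℝ) ^ k / (2 * √k) ≤ (k.choose m : ℝ) := by
  have key : (2 ^ k) ^ 2 ≤ 4 * k * (k.choose m) ^ 2 := by
    obtain h | h : k = 2 * m ∨ k + 1 = 2 * m := by omega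
    · subst h
      have := aux_central m (by omega)
      rw [Nat.centralBinom] at this
      rw [pow_mul]
      norm_num
      nlinarith
    · have := aux_central m (by omega)
      have hm : m.centralBinom = 2 * k.choose m := by
        rw [Nat.centralBinom, ← h]
        obtain ⟨t, rfl⟩ : ∃ t, m = t + 1 := ⟨m - 1, by omega⟩
        have : k = 2 * t + 1 := by omega
        subst this
        rw [Nat.choose_succ_succ]
        have := Nat.choose_symm_half t
        rw [Nat.succ_eq_add_one]
        omega
      rw [hm, ← Nat.pow_mul] at this
      have e : 4 ^ (m * 2) = 4 * (2 ^ k) ^ 2 := by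
        have : (4:ℕ) = 2 ^ 2 := rfl
        rw [this, ← pow_mul, ← pow_mul, ← pow_add]; congr 1; omega
      rw [e] at this
      have : m ≤ k := by omega
      nlinarith [Nat.mul_le_mul_right ((k.choose m)^2) this]
  have key' : ((2:ℝ) ^ k) ^ 2 ≤ 4 * k * (k.choose m : ℝ) ^ 2 := by exact_mod_cast key
  have hk' : (0:ℝ) < k := by exact_mod_cast hk
  have hs : 0 < √(k:ℝ) := Real.sqrt_pos.2 hk'
  rw [div_le_iff₀ (by positivity)]
  refine le_of_sq_le_sq ?_ (by positivity)
  calc _ ≤ _ := key'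
    _ = _ := by rw [mul_pow, mul_pow, Real.sq_sqrt hk'.le]; ring

lemma aux_step (k m i : ℕ) (h2 : 2 * m ≤ k + 1) (d : ℝ) (hd1 : d ≤ 1) (hd : 4 * i ≤ d * (k + 1)) (l : ℕ) (hl : l ≤ i) :
    (k.choose m : ℝ) * (1 - d) ^ l ≤ (k.choose (m + l) : ℝ) := by
  induction l with
  | zero => simp
  | succ l ih =>
    have ih := ih (by omega)
    have hli : (l:ℝ) + 1 ≤ i := by exact_mod_cast hl
    have h2' : 2 * (m:ℝ) ≤ k + 1 := by exact_mod_cast h2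
    have hl0 : (0:ℝ) ≤ l := by positivity
    have hm0 : (0:ℝ) ≤ m := by positivity
    have hmk : m + l ≤ k := by
      have : 4 * (i:ℝ) ≤ k + 1 := by nlinarith
      have : 4 * i ≤ k + 1 := by exact_mod_cast this
      omega
    have hr := Nat.choose_succ_right_eq k (m + l)
    have hr' : (k.choose (m + l + 1) : ℝ) * (m + l + 1) = k.choose (m + l) * (k - (m + l)) := by
      have : ((k - (m+l) : ℕ) : ℝ) = k - (m + l) := by push_cast [hmk]; ring
      rw [← this]; exact_mod_cast hr
    have hd0 : 0 ≤ d := by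
      by_contra h
      push Not at h
      nlinarith
    have hq : (1 - d) * (m + l + 1) ≤ k - (m + l) := by
      nlinarith
    have hpos : (0:ℝ) < m + l + 1 := by positivity
    rw [pow_succ, ← mul_assoc, ← add_assoc]
    refine le_of_mul_le_mul_right ?_ hpos
    rw [hr', mul_assoc]
    refine mul_le_mul ih hq (mul_nonneg (by linarith) hpos.le) (by positivity)

lemma aux_upper (E : ℝ) (hE : 0 < E) (k j : ℕ) (hk : 1 ≤ k) (hkE : 64 * E^2 ≤ k) (hj : k ≤ 2 * j)
    (hjE : (j:ℝ) - k/2 ≤ E * √k) :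
    Real.exp (-(8 * E^2)) / 2 / √k * 2 ^ k ≤ (k.choose j : ℝ) := by
  have hk' : (0:ℝ) < k := by exact_mod_cast hk
  have hs : 0 < √(k:ℝ) := Real.sqrt_pos.2 hk'
  have hss : √(k:ℝ) * √k = k := Real.mul_self_sqrt hk'.le
  set m := (k + 1) / 2 with hm
  obtain ⟨i, rfl⟩ : ∃ i, j = m + i := ⟨j - m, by omega⟩
  have h1 : k ≤ 2 * m := by omega
  have h2 : 2 * m ≤ k + 1 := by omega
  have h1' : (k:ℝ) ≤ 2 * m := by exact_mod_cast h1
  push_cast at hjE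
  have hi : (i:ℝ) ≤ E * √k := by linarith
  have h8 : 8 * E ≤ √k := by
    apply Real.le_sqrt_of_sq_le; nlinarith
  set d := 4 * E / √k with hd
  have hd0 : 0 < d := by positivity
  have hd2 : d ≤ 1/2 := by rw [hd, div_le_iff₀ hs]; linarith
  have hdk : d * k = 4 * E * √k := by
    have h : d * √k = 4 * E := by rw [hd]; field_simp
    rw [← h, mul_assoc, hss]
  have step := aux_step k m i h2 d (by linarith) (by nlinarith) i le_rfl
  have mid := aux_mid k m hk h1 h2
  have hexp : Real.exp (-(2*d)) ≤ 1 - d := by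
    have := Real.add_one_le_exp (2*d)
    rw [Real.exp_neg, inv_le_comm₀ (Real.exp_pos _) (by linarith)]
    refine le_trans ?_ this
    rw [inv_le_iff_one_le_mul₀ (by linarith)]
    nlinarith
  have hpow : Real.exp (-(8 * E^2)) ≤ (1 - d)^i := by
    calc _ ≤ Real.exp (-(2*d)) ^ i := by
          rw [← Real.exp_nat_mul]
          apply Real.exp_le_exp.2
          have : d * √k = 4 * E := by rw [hd]; field_simp
          nlinarith
      _ ≤ _ := by gcongr
  calc _ = 2 ^ k / (2 * √k) * Real.exp (-(8 * E^2)) := by field_simp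
    _ ≤ (k.choose m : ℝ) * (1 - d) ^ i := by gcongr
    _ ≤ _ := step

lemma aux_binom (E : ℝ) (hE : 0 < E) (k j : ℕ) (hk : 1 ≤ k) (hkE : 64 * E^2 ≤ k) (hj : j ≤ k)
    (hjE : |(j:ℝ) - k/2| ≤ E * √k) :
    Real.exp (-(8 * E^2)) / 2 / √k * 2 ^ k ≤ (k.choose j : ℝ) := by
  rw [abs_le] at hjE
  by_cases h : k ≤ 2 * j
  · exact aux_upper E hE k j hk hkE h hjE.2
  · rw [← Nat.choose_symm hj]
    refine aux_upper E hE k (k - j) hk hkE (by omega) ?_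
    push_cast [hj]
    linarith [hjE.1]

/-- probability of a word -/
noncomputable def wordP (p : ℝ) {k : ℕ} (r : Fin k → Bool) : ℝ := ∏ j, if r j then p else 1 - p

def prefEv (k : ℕ) (r : Fin k → Bool) (i : ℕ) : Set (ℕ → ℕ → Bool) := {ω | ∀ j : Fin k, ω i j = r j}

lemma measurableSet_prefEv (k : ℕ) (r : Fin k → Bool) (i : ℕ) : MeasurableSet (prefEv k r i) := by
  unfold prefEv
  rw [Set.ofPred_forall]
  refine MeasurableSet.iInter fun j => ?_
  have : Measurable fun ω : ℕ → ℕ → Bool => ω i j :=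
    (measurable_pi_apply (j : ℕ)).comp (measurable_pi_apply i)
  exact this (measurableSet_singleton (r j))

lemma wordP_nonneg {p : ℝ} (h0 : 0 ≤ p) (h1 : p ≤ 1) {k : ℕ} (r : Fin k → Bool) : 0 ≤ wordP p r := by
  apply Finset.prod_nonneg
  intro j _
  split <;> linarith

lemma cyl (p : ℝ) (h0 : 0 ≤ p) (h1 : p ≤ 1) (ν : Measure (ℕ → ℕ → Bool)) (hν : IIDBits p ν) (k : ℕ) (r : Fin k → Bool)
    (T : Finset ℕ) : ν.real {ω | ∀ i ∈ T, ω ∈ prefEv k r i} = wordP p r ^ T.card := by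
  have h := hν.2 (T ×ˢ Finset.range k) (fun s => if h : s.2 < k then r ⟨s.2, h⟩ else false)
  have e : {ω : ℕ → ℕ → Bool | ∀ i ∈ T, ω ∈ prefEv k r i} =
      {ω | ∀ s ∈ T ×ˢ Finset.range k, ω s.1 s.2 = (fun s : ℕ × ℕ => if h : s.2 < k then r ⟨s.2, h⟩ else false) s} := by
    ext ω
    simp only [prefEv, Set.mem_ofPred_eq, Finset.mem_product, Finset.mem_range, Prod.forall]
    constructor
    · rintro h i j ⟨hi, hj⟩
      simpa [hj] using h i hi ⟨j, hj⟩
    · intro h i hi j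
      simpa using h i j ⟨hi, j.2⟩
  rw [measureReal_def, e, h, Finset.prod_product, ← Finset.prod_const, ENNReal.toReal_prod]
  refine Finset.prod_congr rfl fun i _ => ?_
  rw [ENNReal.toReal_prod, wordP, Finset.prod_range]
  refine Finset.prod_congr rfl fun j _ => ?_
  rw [ENNReal.toReal_ofReal]
  · simp
  · split_ifs <;> linarith

lemma cyl2 (p : ℝ) (h0 : 0 ≤ p) (h1 : p ≤ 1) (ν : Measure (ℕ → ℕ → Bool)) (hν : IIDBits p ν) (k : ℕ) (r : Fin k → Bool)
    (U : Finset ℕ) : ∀ T : Finset ℕ, Disjoint U T →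
    ν.real {ω | (∀ i ∈ U, ω ∉ prefEv k r i) ∧ ∀ i ∈ T, ω ∈ prefEv k r i}
      = (1 - wordP p r) ^ U.card * wordP p r ^ T.card := by
  have := hν.1
  induction U using Finset.induction_on with
  | empty => intro T _; simpa using cyl p h0 h1 ν hν k r T
  | insert a U ha ih =>
    intro T hd
    rw [Finset.disjoint_insert_left] at hd
    have hT := ih T hd.2
    have hT' := ih (insert a T) (by rw [Finset.disjoint_insert_right]; exact ⟨ha, hd.2⟩)
    have key := measureReal_inter_add_sdiff (μ := ν)
      (s := {ω | (∀ i ∈ U, ω ∉ prefEv k r i) ∧ ∀ i ∈ T, ω ∈ prefEv k r i})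
      (t := prefEv k r a) (measurableSet_prefEv k r a)
    have e1 : {ω | (∀ i ∈ U, ω ∉ prefEv k r i) ∧ ∀ i ∈ T, ω ∈ prefEv k r i} ∩ prefEv k r a =
       {ω | (∀ i ∈ U, ω ∉ prefEv k r i) ∧ ∀ i ∈ insert a T, ω ∈ prefEv k r i} := by
      ext ω; simp; tauto
    have e2 : {ω | (∀ i ∈ U, ω ∉ prefEv k r i) ∧ ∀ i ∈ T, ω ∈ prefEv k r i} \ prefEv k r a =
       {ω | (∀ i ∈ insert a U, ω ∉ prefEv k r i) ∧ ∀ i ∈ T, ω ∈ prefEv k r i} := by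
      ext ω; simp; tauto
    rw [e1, e2, hT, hT'] at key
    rw [Finset.card_insert_of_notMem hd.1] at key
    rw [Finset.card_insert_of_notMem ha]
    linear_combination key

open Classical in
lemma prefCount_eq (ω : ℕ → ℕ → Bool) (n k : ℕ) (r : Fin k → Bool) :
    prefCount ω n k r = ∑ i ∈ Finset.range n, (prefEv k r i).indicator (fun _ => 1) ω := by
  rw [prefCount, Finset.card_filter]
  refine Finset.sum_congr rfl fun i _ => ?_
  simp [prefEv, Set.indicator_apply]

lemma measurable_prefCount (n k : ℕ) (r : Fin k → Bool) : Measurable fun ω => prefCount ω n k r := by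
  classical
  simp_rw [prefCount_eq]
  refine Finset.measurable_sum _ fun i _ => ?_
  exact measurable_const.indicator (measurableSet_prefEv k r i)

lemma prob_zero (p : ℝ) (h0 : 0 ≤ p) (h1 : p ≤ 1) (ν : Measure (ℕ → ℕ → Bool)) (hν : IIDBits p ν) (n k : ℕ) (r : Fin k → Bool) :
    ν.real {ω | prefCount ω n k r = 0} = (1 - wordP p r) ^ n := by
  have := cyl2 p h0 h1 ν hν k r (Finset.range n) ∅ (by simp)
  simp only [Finset.card_range, Finset.card_empty, pow_zero, mul_one] at this
  rw [← this]
  congr 1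
  ext ω
  simp [prefCount, Finset.filter_eq_empty_iff, prefEv]

lemma prob_one (p : ℝ) (h0 : 0 ≤ p) (h1 : p ≤ 1) (ν : Measure (ℕ → ℕ → Bool)) (hν : IIDBits p ν) (n k : ℕ) (r : Fin k → Bool) :
    ν.real {ω | prefCount ω n k r = 1} = n * ((1 - wordP p r) ^ (n - 1) * wordP p r) := by
  have := hν.1
  have e : {ω | prefCount ω n k r = 1} = ⋃ a ∈ Finset.range n,
      {ω | (∀ i ∈ (Finset.range n).erase a, ω ∉ prefEv k r i) ∧ ∀ i ∈ ({a} : Finset ℕ), ω ∈ prefEv k r i} := by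
    ext ω
    simp only [prefCount, Finset.card_eq_one, Set.mem_ofPred_eq, Set.mem_iUnion, prefEv, Finset.ext_iff,
      Finset.mem_filter, Finset.mem_range, Finset.mem_singleton, Finset.mem_erase]
    constructor
    · rintro ⟨a, ha⟩
      refine ⟨a, ((ha a).2 rfl).1, fun i hi h => hi.1 ((ha i).1 ⟨hi.2, h⟩), ?_⟩
      rintro i rfl
      exact ((ha i).2 rfl).2
    · rintro ⟨a, han, h1, h2⟩
      refine ⟨a, fun i => ⟨fun h => ?_, ?_⟩⟩
      · by_contra hne
        exact h1 i ⟨hne, h.1⟩ h.2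
      · rintro rfl
        exact ⟨han, h2 i rfl⟩
  have hm : ∀ a, MeasurableSet {ω | (∀ i ∈ (Finset.range n).erase a, ω ∉ prefEv k r i) ∧ ∀ i ∈ ({a} : Finset ℕ), ω ∈ prefEv k r i} := by
    intro a
    refine MeasurableSet.inter (s₁ := {ω | ∀ i ∈ (Finset.range n).erase a, ω ∉ prefEv k r i}) (s₂ := {ω | ∀ i ∈ ({a} : Finset ℕ), ω ∈ prefEv k r i}) ?_ ?_
    · simp only [Set.ofPred_forall]
      exact Finset.measurableSet_biInter _ fun i _ => (measurableSet_prefEv k r i).compl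
    · simp only [Set.ofPred_forall]
      exact Finset.measurableSet_biInter _ fun i _ => (measurableSet_prefEv k r i)
  rw [e, measureReal_biUnion_finset]
  · rw [Finset.sum_congr rfl (g := fun _ => ((1 - wordP p r) ^ (n - 1) * wordP p r))]
    · simp
    · intro a ha
      rw [cyl2 p h0 h1 ν hν k r _ _ (by simp), Finset.card_erase_of_mem ha]
      simp
  · intro a ha b hb hab
    rw [Function.onFun, Set.disjoint_left]
    rintro ω ⟨h1, h2⟩ ⟨h3, h4⟩
    exact h3 a (by rw [Finset.mem_erase]; exact ⟨hab, ha⟩) (h2 a (by simp))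
  · intro a _; exact hm a

lemma prob_two (p : ℝ) (h0 : 0 ≤ p) (h1 : p ≤ 1) (ν : Measure (ℕ → ℕ → Bool)) (hν : IIDBits p ν) (n k : ℕ) (r : Fin k → Bool) :
    ν.real {ω | 2 ≤ prefCount ω n k r} = 1 - (1 - wordP p r) ^ n - n * ((1 - wordP p r) ^ (n - 1) * wordP p r) := by
  have := hν.1
  have m0 : MeasurableSet {ω | prefCount ω n k r = 0} := measurable_prefCount n k r (measurableSet_singleton 0)
  have m1 : MeasurableSet {ω | prefCount ω n k r = 1} := measurable_prefCount n k r (measurableSet_singleton 1)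
  have e : {ω | 2 ≤ prefCount ω n k r} = ({ω | prefCount ω n k r = 0} ∪ {ω | prefCount ω n k r = 1})ᶜ := by
    ext ω; simp; omega
  rw [e, probReal_compl_eq_one_sub (m0.union m1), measureReal_union _ m1, prob_zero p h0 h1 ν hν, prob_one p h0 h1 ν hν]
  · ring
  · rw [Set.disjoint_left]; intro ω h h'; simp at h h'; omega

noncomputable def gPo (x : ℝ) : ℝ := 1 - (1 + x) * Real.exp (-x)

lemma hasSum_po (l w : ℝ) : HasSum (fun n : ℕ => Real.exp (-l) * l ^ n / (n.factorial : ℝ) *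
    (1 - (1 - w) ^ n - n * ((1 - w) ^ (n - 1) * w))) (gPo (l * w)) := by
  have E : ∀ x : ℝ, HasSum (fun n : ℕ => x ^ n / (n.factorial : ℝ)) (Real.exp x) := fun x => by
    rw [Real.exp_eq_exp_ℝ]; exact NormedSpace.expSeries_div_hasSum_exp x
  have a := (E l).mul_left (Real.exp (-l))
  have b := (E (l * (1 - w))).mul_left (Real.exp (-l))
  have c : HasSum (fun n : ℕ => Real.exp (-l) * l ^ n / (n.factorial : ℝ) * (n * ((1 - w) ^ (n - 1) * w)))
      (Real.exp (-l) * (l * w) * Real.exp (l * (1 - w))) := by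
    rw [← hasSum_nat_add_iff' 1]
    simp only [Finset.range_one, Finset.sum_singleton, Nat.cast_zero, zero_mul, mul_zero, sub_zero]
    refine ((E (l * (1 - w))).mul_left (Real.exp (-l) * (l * w))).congr_fun ?_
    intro n
    rw [Nat.factorial_succ]
    have : (n.factorial : ℝ) ≠ 0 := by positivity
    push_cast
    rw [mul_pow]
    field_simp
    ring
  have := (a.sub b).sub c
  convert! this using 1
  · ext n
    rw [mul_pow]; ring
  · rw [gPo, ← Real.exp_add, mul_assoc, mul_comm (l * w), ← mul_assoc, ← Real.exp_add]
    have : -l + l * (1 - w) = -(l * w) := by ring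
    rw [this]; simp; ring

lemma expect_frac (p : ℝ) (h0 : 0 ≤ p) (h1 : p ≤ 1) (ν : Measure (ℕ → ℕ → Bool)) (hν : IIDBits p ν) (k : ℕ) (lam : NNReal) :
    ∫ ω, fracFilledPo k ω ∂poModel lam ν = (∑ r : Fin k → Bool, gPo (lam * wordP p r)) / 2 ^ k := by
  have := hν.1
  let S : (Fin k → Bool) → Set (ℕ × (ℕ → ℕ → Bool)) := fun r => {ω | 2 ≤ prefCount ω.2 ω.1 k r}
  have mS : ∀ r, MeasurableSet (S r) := by
    intro r
    have : Measurable fun ω : ℕ × (ℕ → ℕ → Bool) => prefCount ω.2 ω.1 k r :=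
      measurable_from_prod_countable_right fun n => measurable_prefCount n k r
    exact this (measurableSet_Ici (a := 2))
  have hf : ∀ ω, fracFilledPo k ω = (∑ r, (S r).indicator (fun _ => (1:ℝ)) ω) / 2 ^ k := by
    intro ω
    rw [fracFilledPo, fillCountPo, fillCount, Finset.card_filter]
    push_cast
    congr 1
    refine Finset.sum_congr rfl fun r _ => ?_
    simp [S, Set.indicator_apply]
  have : IsProbabilityMeasure (poModel lam ν) := by unfold poModel; infer_instance
  have hint : ∀ r, Integrable ((S r).indicator (fun _ => (1:ℝ))) (poModel lam ν) :=
    fun r => (integrable_const _).indicator (mS r)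
  simp_rw [hf]
  rw [integral_div, integral_finsetSum _ fun r _ => hint r]
  congr 1
  refine Finset.sum_congr rfl fun r _ => ?_
  have hr := hint r
  unfold poModel at hr ⊢
  rw [integral_prod _ hr]
  have hn : ∀ n : ℕ, ∫ ω, (S r).indicator (fun _ => (1:ℝ)) (n, ω) ∂ν =
      1 - (1 - wordP p r) ^ n - n * ((1 - wordP p r) ^ (n - 1) * wordP p r) := by
    intro n
    rw [← prob_two p h0 h1 ν hν n k r]
    have : (fun ω => (S r).indicator (fun _ => (1:ℝ)) (n, ω)) =
      ({ω | 2 ≤ prefCount ω n k r}).indicator 1 := by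
      ext ω; simp [S, Set.indicator_apply]
    rw [this, integral_indicator_one]
    exact measurable_prefCount n k r (measurableSet_Ici (a := 2))
  simp_rw [hn]
  rw [integral_poissonMeasure]
  exact (hasSum_po lam (wordP p r)).tsum_eq

lemma gPo_lt {x y : ℝ} (hy : 0 ≤ y) (hxy : y < x) : gPo y < gPo x := by
  unfold gPo
  have h : (1 + x) * Real.exp (-x) < (1 + y) * Real.exp (-y) := by
    have e : Real.exp (-y) = Real.exp (x - y) * Real.exp (-x) := by
      rw [← Real.exp_add]; congr 1; ring
    rw [e, ← mul_assoc]
    refine mul_lt_mul_of_pos_right ?_ (Real.exp_pos _)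
    have := Real.add_one_lt_exp (x := x - y) (by linarith)
    nlinarith
  linarith

/-- one-step loss -/
noncomputable def hPo (p x : ℝ) : ℝ := gPo x - (gPo (p * x) + gPo ((1 - p) * x)) / 2

lemma hPo_pos {p x : ℝ} (h0 : 0 < p) (h1 : p < 1) (hx : 0 < x) : 0 < hPo p x := by
  unfold hPo
  have a := gPo_lt (x := x) (y := p * x) (by positivity) (by nlinarith)
  have b := gPo_lt (x := x) (y := (1 - p) * x) (mul_nonneg (by linarith) hx.le) (by nlinarith)
  linarith

lemma hPo_min {p : ℝ} (h0 : 0 < p) (h1 : p < 1) (M : ℝ) (hM : 1 ≤ M) :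
    ∃ c > 0, ∀ x ∈ Set.Icc 1 M, c ≤ hPo p x := by
  have hc : Continuous (hPo p) := by unfold hPo gPo; fun_prop
  obtain ⟨x, hx, hmin⟩ := (isCompact_Icc (a := (1:ℝ)) (b := M)).exists_isMinOn ⟨1, by simp [hM]⟩ hc.continuousOn
  exact ⟨hPo p x, hPo_pos h0 h1 (by linarith [hx.1]), fun y hy => hmin hy⟩

lemma gap_eq (p : ℝ) (h0 : 0 ≤ p) (h1 : p ≤ 1) (ν : Measure (ℕ → ℕ → Bool)) (hν : IIDBits p ν) (k : ℕ) (lam : NNReal) :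
    (∫ ω, fracFilledPo k ω ∂poModel lam ν) - (∫ ω, fracFilledPo (k + 1) ω ∂poModel lam ν) =
      (∑ r : Fin k → Bool, hPo p (lam * wordP p r)) / 2 ^ k := by
  rw [expect_frac p h0 h1 ν hν, expect_frac p h0 h1 ν hν]
  have e : ∑ r : Fin (k + 1) → Bool, gPo (lam * wordP p r) =
      ∑ r : Fin k → Bool, (gPo (p * (lam * wordP p r)) + gPo ((1 - p) * (lam * wordP p r))) := by
    rw [← (Fin.consEquiv fun _ : Fin (k + 1) => Bool).sum_comp, Fintype.sum_prod_type_right]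
    refine Finset.sum_congr rfl fun r _ => ?_
    rw [Fintype.sum_bool]
    simp only [Fin.consEquiv, Equiv.coe_fn_mk, wordP, Fin.prod_univ_succ, Fin.cons_zero, Fin.cons_succ]
    simp only [if_true, Bool.false_eq_true, if_false]
    congr 2 <;> ring
  rw [e, pow_succ]
  simp only [hPo, Finset.sum_sub_distrib, ← Finset.sum_div]
  generalize (∑ r : Fin k → Bool, (gPo (p * (lam * wordP p r)) + gPo ((1 - p) * (lam * wordP p r)))) = X
  field_simp

lemma wordP_finset (p : ℝ) (k : ℕ) (s : Finset (Fin k)) :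
    wordP p (fun i => decide (i ∈ s)) = p ^ s.card * (1 - p) ^ (k - s.card) := by
  unfold wordP
  simp only [decide_eq_true_eq]
  rw [Finset.prod_ite]
  simp only [Finset.prod_const]
  congr 2
  · congr 1; ext; simp
  · have : Finset.univ.filter (fun i => i ∉ s) = sᶜ := by ext; simp
    rw [this, Finset.card_compl, Fintype.card_fin]

lemma sum_lower (p : ℝ) (h0 : 0 < p) (h1 : p < 1) (k j : ℕ) (l : ℝ) (hl : 0 < l) :
    (k.choose j : ℝ) * hPo p (l * (p ^ j * (1 - p) ^ (k - j))) ≤ ∑ r : Fin k → Bool, hPo p (l * wordP p r) := by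
  have h1' : 0 < 1 - p := by linarith
  have hinj : Function.Injective (fun (s : Finset (Fin k)) (i : Fin k) => decide (i ∈ s)) := by
    intro s t h
    ext i
    have := congrFun h i
    simpa using this
  calc _ = ∑ s ∈ Finset.powersetCard j (Finset.univ : Finset (Fin k)), hPo p (l * wordP p (fun i => decide (i ∈ s))) := by
        rw [Finset.sum_congr rfl (g := fun _ => hPo p (l * (p ^ j * (1 - p) ^ (k - j))))]
        · simp
        · intro s hs
          rw [wordP_finset, (Finset.mem_powersetCard.1 hs).2]
    _ = ∑ r ∈ (Finset.powersetCard j (Finset.univ : Finset (Fin k))).image (fun s i => decide (i ∈ s)), hPo p (l * wordP p r) := by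
        rw [Finset.sum_image hinj.injOn]
    _ ≤ _ := by
        refine Finset.sum_le_sum_of_subset_of_nonneg (Finset.subset_univ _) fun r _ _ => ?_
        refine (hPo_pos h0 h1 (mul_pos hl ?_)).le
        refine Finset.prod_pos fun j _ => ?_
        split_ifs <;> assumption

/-- choice of the level `j` -/
lemma choose_level (p : ℝ) (hp : 1 / 2 < p) (hp1 : p < 1) (A : ℝ) (hA : 0 < A) :
    ∃ E > (0:ℝ), ∀ l : ℝ, 0 < l → ∀ k : ℕ, 1 ≤ k → 4 * E ^ 2 ≤ k →
      |(k : ℝ) - Real.logb (1 / Real.sqrt (p * (1 - p))) l| ≤ A * Real.sqrt k →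
      ∃ j : ℕ, j ≤ k ∧ |(j : ℝ) - k / 2| ≤ E * √k ∧
        l * (p ^ j * (1 - p) ^ (k - j)) ∈ Set.Icc 1 (p / (1 - p)) := by
  have hp0 : 0 < p := by linarith
  have hq0 : 0 < 1 - p := by linarith
  set a := Real.log p with ha
  set b := Real.log (1 - p) with hb
  have hab : b < a := Real.log_lt_log hq0 (by linarith)
  have ha0 : a < 0 := Real.log_neg hp0 hp1
  set ℓ := -(a + b) / 2 with hℓ
  have hℓ0 : 0 < ℓ := by rw [hℓ]; linarith
  have hlog : Real.log (1 / √(p * (1 - p))) = ℓ := by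
    rw [one_div, Real.log_inv, Real.log_sqrt (by positivity), Real.log_mul hp0.ne' hq0.ne']
    rw [hℓ]; ring
  set ρ := a - b with hρ
  have hρ0 : 0 < ρ := by rw [hρ]; linarith
  refine ⟨A * ℓ / ρ + 1, by positivity, ?_⟩
  intro l hl k hk hkE hlk
  have hk' : (1:ℝ) ≤ k := by exact_mod_cast hk
  have hs1 : 1 ≤ √(k:ℝ) := Real.one_le_sqrt.2 hk'
  have hss : √(k:ℝ) * √k = k := Real.mul_self_sqrt (by linarith)
  rw [Real.logb, hlog] at hlk
  set L := Real.log l with hL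
  set x := (-L - k * b) / ρ with hx
  have hxk : x - k / 2 = (k - L / ℓ) * (ℓ / ρ) := by
    have : a = ρ + b := by rw [hρ]; ring
    have h2 : (2:ℝ) * ℓ = -(ρ + 2 * b) := by rw [hℓ, this]; ring
    rw [hx, sub_mul]
    have e1 : L / ℓ * (ℓ / ρ) = L / ρ := by field_simp
    rw [e1]
    field_simp
    linear_combination (-(k:ℝ)) * h2
  have hxa : |x - k / 2| ≤ A * ℓ / ρ * √k := by
    rw [hxk, abs_mul, abs_of_pos (show 0 < ℓ / ρ by positivity)]
    calc _ ≤ A * √k * (ℓ / ρ) := by gcongr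
      _ = _ := by ring
  have hE2 : (A * ℓ / ρ + 1) * √k ≤ k / 2 := by
    have : 2 * (A * ℓ / ρ + 1) ≤ √k := by
      apply Real.le_sqrt_of_sq_le; nlinarith
    nlinarith
  set B := A * ℓ / ρ with hB
  have hz : |(⌈x⌉ : ℝ) - k / 2| ≤ (B + 1) * √k := by
    have c1 := Int.le_ceil x
    have c2 := Int.ceil_lt_add_one x
    rw [abs_le] at hxa ⊢
    constructor <;> nlinarith [hxa.1, hxa.2]
  have hz' := abs_le.1 hz
  have hz0 : 0 ≤ ⌈x⌉ := by
    have : (0:ℝ) ≤ (⌈x⌉ : ℝ) := by linarith [hz'.1]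
    exact_mod_cast this
  obtain ⟨j, hj⟩ := Int.eq_ofNat_of_zero_le hz0
  have hjr : (⌈x⌉ : ℝ) = (j : ℝ) := by rw [hj]; simp
  have c1 := Int.le_ceil x
  have c2 := Int.ceil_lt_add_one x
  rw [hjr] at hz hz' c1 c2
  have hjk : j ≤ k := by
    have : (j:ℝ) ≤ k := by linarith [hz'.2]
    exact_mod_cast this
  refine ⟨j, hjk, hz, ?_⟩
  have hxr : x * ρ = -L - k * b := by rw [hx]; field_simp
  have hpos : 0 < l * (p ^ j * (1 - p) ^ (k - j)) := by positivity
  have hval : Real.log (l * (p ^ j * (1 - p) ^ (k - j))) = (j - x) * ρ := by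
    rw [Real.log_mul hl.ne' (by positivity), Real.log_mul (by positivity) (by positivity), Real.log_pow, Real.log_pow]
    push_cast [hjk]
    rw [sub_mul (j:ℝ) x ρ, hxr, ← ha, ← hb, ← hL, hρ]
    ring
  constructor
  · rw [← Real.log_nonneg_iff hpos, hval]
    exact mul_nonneg (by linarith) hρ0.le
  · rw [← Real.log_le_log_iff hpos (by positivity), hval, Real.log_div hp0.ne' hq0.ne', ← ha, ← hb, ← hρ]
    nlinarith

/-- Lemma 2 of Janson–Szpankowski: for `p ∈ (1/2, 1)` and any `A > 0`, if
`|k - log_{1/√(pq)} λ| ≤ A k^{1/2}` and `k` is large, then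
`E X̄_k(λ) - E X̄_{k+1}(λ) > c k^{-1/2}`. -/
theorem expectation_fracFilledPo_gap
    (p q : ℝ) (hp : 1 / 2 < p) (hp1 : p < 1) (hq : q = 1 - p)
    (ν : Measure (ℕ → ℕ → Bool)) (hν : IIDBits p ν) :
    ∀ A > (0 : ℝ), ∃ c > (0 : ℝ), ∃ k₀ : ℕ, ∀ lam : NNReal, 0 < lam → ∀ k : ℕ, k₀ ≤ k →
      |(k : ℝ) - Real.logb (1 / Real.sqrt (p * q)) lam| ≤ A * Real.sqrt k →
        c / Real.sqrt k <
          (∫ ω, fracFilledPo k ω ∂poModel lam ν) -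
            ∫ ω, fracFilledPo (k + 1) ω ∂poModel lam ν := by
  intro A hA
  subst hq
  have hp0 : 0 < p := by linarith
  have hq0 : 0 < 1 - p := by linarith
  obtain ⟨E, hE, hlev⟩ := choose_level p hp hp1 A hA
  obtain ⟨m, hm, hmin⟩ := hPo_min hp0 hp1 (p / (1 - p)) (by rw [le_div_iff₀ hq0]; linarith)
  refine ⟨Real.exp (-(8 * E^2)) / 2 * m / 2, by positivity, ⌈64 * E ^ 2⌉₊ + 1, ?_⟩
  intro lam hlam k hk hlk
  have hk1 : 1 ≤ k := by omega
  have hkE : 64 * E ^ 2 ≤ k := by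
    refine (Nat.le_ceil _).trans ?_
    exact_mod_cast (by omega : ⌈64 * E ^ 2⌉₊ ≤ k)
  have hlam' : (0:ℝ) < lam := by exact_mod_cast hlam
  obtain ⟨j, hjk, hj, hx⟩ := hlev lam hlam' k hk1 (by nlinarith [sq_nonneg E]) hlk
  have hbin := aux_binom E hE k j hk1 hkE hjk hj
  rw [gap_eq p hp0.le hp1.le ν hν]
  have hsum := sum_lower p hp0 hp1 k j lam hlam'
  have hmx := hmin _ hx
  have hs : 0 < √(k:ℝ) := Real.sqrt_pos.2 (by exact_mod_cast hk1)
  rw [lt_div_iff₀ (by positivity)]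
  calc _ < Real.exp (-(8 * E^2)) / 2 / √k * 2 ^ k * m := by
        have : 0 < Real.exp (-(8 * E^2)) / 2 / √k * 2 ^ k * m := by positivity
        calc _ = (Real.exp (-(8 * E^2)) / 2 / √k * 2 ^ k * m) / 2 := by ring
          _ < _ := by linarith
    _ ≤ (k.choose j : ℝ) * hPo p (lam * (p ^ j * (1 - p) ^ (k - j))) := by gcongr
    _ ≤ _ := hsum
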